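/- arXiv:2111.11963 — 2 statements merged into one kernel-verified Lean document; each statement's English description precedes it below -/
import Mathlib

section
/- For every single-period reservation problem there exists a period-1 reservation table Z such that every internal entry satisfies Z_{ij} ∈ {⌊α_j q_i⌋, ⌈α_j q_i⌉} and every column total satisfies ∑_{i∈D} Z_{ij} ∈ {⌊α_j ∑_{i∈D} q_i⌋, ⌈α_j ∑_{i∈D} q_i⌉} (i.e., a deterministic single-period solution staying within quota exists). -/
open Finset

/-!
Border the table of fair shares by the negatives of its margins, so that every row and every column
sums to zero. In such a table no row or column has exactly one non-integral cell, so the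
non-integral cells are at least as many as the rows and columns that they meet. As the row sums and
the column sums add up to the same total, these zero-sum constraints are dependent, and hence some
nonzero zero-margin table is supported on the non-integral cells. Moving along it until the first
cell becomes integral keeps every cell between its floor and its ceiling and the margins zero.
After finitely many moves the table is integral, and its border holds the rounded margins.
-/

section FloorCeil

variable {K : Type*} [Ring K] [LinearOrder K] [FloorRing K] {x y : K} {n : ℤ}

lemma eq_floor_or_eq_ceil_of_mem_Icc (hn : n ∈ Set.Icc ⌊x⌋ ⌈x⌉) : n = ⌊x⌋ ∨ n = ⌈x⌉ := by
  have := Int.ceil_le_floor_add_one x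
  have := hn.1
  have := hn.2
  omega

lemma Icc_floor_ceil_subset (hy : y ∈ Set.Icc (⌊x⌋ : K) ⌈x⌉) :
    Set.Icc ⌊y⌋ ⌈y⌉ ⊆ Set.Icc ⌊x⌋ ⌈x⌉ :=
  Set.Icc_subset_Icc (Int.le_floor.2 hy.1) (Int.ceil_le.2 hy.2)

lemma mem_Icc_floor_ceil_of_add_eq_zero [IsStrictOrderedRing K] {m : ℤ} (hmn : m + n = 0)
    (hm : m ∈ Set.Icc ⌊-x⌋ ⌈-x⌉) : n ∈ Set.Icc ⌊x⌋ ⌈x⌉ := by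
  rw [Int.floor_neg, Int.ceil_neg] at hm
  have := hm.1
  have := hm.2
  constructor <;> omega

end FloorCeil

section Rounding

variable {ι K : Type*}

/-- The coordinates that are still to be rounded: those at which `x` is not an integer. -/
def fractionalSupport [IntCast K] (x : ι → K) : Set ι :=
  {p | x p ∉ Set.range ((↑) : ℤ → K)}

lemma fractionalSupport_add_smul_ssubset [Ring K] {x y : ι → K} {t : K}
    (hy : Function.support y ⊆ fractionalSupport x) {p : ι} (hp : p ∈ Function.support y)
    (hint : (x + t • y) p ∈ Set.range ((↑) : ℤ → K)) :
    fractionalSupport (x + t • y) ⊂ fractionalSupport x := by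
  refine (Set.ssubset_iff_of_subset fun k hk => ?_).2 ⟨p, hy hp, not_not.2 hint⟩
  by_cases hyk : y k = 0
  · simpa [fractionalSupport, hyk] using hk
  · exact hy hyk

variable [Field K] [LinearOrder K] [IsStrictOrderedRing K] [FloorRing K]

lemma exists_nonneg_add_mul_mem_range_intCast (x : K) {y : K} (hy : y ≠ 0) :
    ∃ T ≥ 0, x + T * y ∈ Set.range ((↑) : ℤ → K) ∧
      ∀ t ∈ Set.Icc 0 T, x + t * y ∈ Set.Icc (⌊x⌋ : K) ⌈x⌉ := by
  have hfloor := Int.floor_le x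
  have hceil := Int.le_ceil x
  rcases hy.lt_or_gt with hneg | hpos
  · refine ⟨(⌊x⌋ - x) / y, div_nonneg_of_nonpos (by linarith) hneg.le, ⟨⌊x⌋, ?_⟩,
      fun t ⟨ht₀, htT⟩ => ?_⟩
    · rw [div_mul_cancel₀ _ hy, add_sub_cancel]
    · have := mul_nonpos_of_nonneg_of_nonpos ht₀ hneg.le
      rw [le_div_iff_of_neg hneg] at htT
      constructor <;> linarith
  · refine ⟨(⌈x⌉ - x) / y, div_nonneg (by linarith) hpos.le, ⟨⌈x⌉, ?_⟩, fun t ⟨ht₀, htT⟩ => ?_⟩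
    · rw [div_mul_cancel₀ _ hy, add_sub_cancel]
    · have := mul_nonneg ht₀ hpos.le
      rw [le_div_iff₀ hpos] at htT
      constructor <;> linarith

lemma exists_add_smul_apply_mem_range_intCast [Finite ι] (x : ι → K) {y : ι → K} (hy : y ≠ 0) :
    ∃ t : K, (∀ p, (x + t • y) p ∈ Set.Icc (⌊x p⌋ : K) ⌈x p⌉) ∧
      ∃ p ∈ Function.support y, (x + t • y) p ∈ Set.range ((↑) : ℤ → K) := by
  choose! T hT₀ hint hbetween using fun p =>
    exists_nonneg_add_mul_mem_range_intCast (x p) (y := y p)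
  obtain ⟨p₀, hp₀, hmin⟩ :=
    Set.exists_min_image _ T (Function.support y).toFinite (Function.support_nonempty_iff.2 hy)
  refine ⟨T p₀, fun p => ?_, p₀, hp₀, hint p₀ hp₀⟩
  by_cases hp : y p = 0
  · simpa [hp] using And.intro (Int.floor_le (x p)) (Int.le_ceil (x p))
  · exact hbetween p hp _ ⟨hT₀ p₀ hp₀, hmin p hp⟩

theorem exists_int_rounding_mem_submodule [Finite ι] {V : Submodule K (ι → K)}
    (hV : ∀ x ∈ V, (fractionalSupport x).Nonempty →
      ∃ y ∈ V, y ≠ 0 ∧ Function.support y ⊆ fractionalSupport x)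
    {x : ι → K} (hx : x ∈ V) :
    ∃ z : ι → ℤ, (fun p => (z p : K)) ∈ V ∧ ∀ p, z p ∈ Set.Icc ⌊x p⌋ ⌈x p⌉ := by
  induction hS : fractionalSupport x using WellFoundedLT.induction generalizing x with
  | _ S ih
  subst hS
  rcases (fractionalSupport x).eq_empty_or_nonempty with hempty | hne
  · have hint (p : ι) : ∃ n : ℤ, (n : K) = x p := by
      by_contra hp
      exact hempty.le hp
    choose z hz using hint
    exact ⟨z, by simpa only [hz] using hx, fun p => by simp [← hz]⟩
  · obtain ⟨y, hyV, hy, hsupp⟩ := hV x hx hne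
    obtain ⟨t, hbetween, p, hp, hint⟩ := exists_add_smul_apply_mem_range_intCast x hy
    obtain ⟨z, hzV, hz⟩ := ih _ (fractionalSupport_add_smul_ssubset hsupp hp hint)
      (V.add_mem hx (V.smul_mem t hyV)) rfl
    exact ⟨z, hzV, fun p => Icc_floor_ceil_subset (hbetween p) (hz p)⟩

end Rounding

lemma ker_ne_bot_of_range_ne_top_of_finrank_le {K V W : Type*} [DivisionRing K] [AddCommGroup V]
    [Module K V] [AddCommGroup W] [Module K W] [FiniteDimensional K V] [FiniteDimensional K W]
    {f : V →ₗ[K] W} (hf : LinearMap.range f ≠ ⊤)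
    (hdim : Module.finrank K W ≤ Module.finrank K V) : LinearMap.ker f ≠ ⊥ := by
  rw [← f.ker_rangeRestrict]
  exact LinearMap.ker_ne_bot_of_finrank_lt ((Submodule.finrank_lt hf).trans_le hdim)

lemma two_mul_card_image_le_card {E V : Type*} [DecidableEq V] {S : Finset E} {f : E → V}
    (hf : ∀ p ∈ S, ∃ p' ∈ S, p' ≠ p ∧ f p' = f p) : 2 * #(S.image f) ≤ #S := by
  refine mul_card_image_le_card S 2 fun v hv => ?_
  obtain ⟨p, hp, rfl⟩ := mem_image.1 hv
  obtain ⟨p', hp', hne, heq⟩ := hf p hp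
  exact one_lt_card.2 ⟨p', mem_filter.2 ⟨hp', heq⟩, p, mem_filter.2 ⟨hp, rfl⟩, hne⟩

lemma exists_ne_notMem_of_sum_mem {ι G : Type*} [Fintype ι] [AddCommGroup G] {H : AddSubgroup G}
    {x : ι → G} (hsum : ∑ i, x i ∈ H) {i : ι} (hi : x i ∉ H) : ∃ k, k ≠ i ∧ x k ∉ H := by
  classical
  by_contra! hothers
  rw [← add_sum_erase univ x (mem_univ i)] at hsum
  have herase : ∑ k ∈ univ.erase i, x k ∈ H :=
    sum_mem fun k hk => hothers k (ne_of_mem_erase hk)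
  exact hi ((H.add_mem_cancel_right herase).1 hsum)

section Tables

variable {R C K : Type*}

lemma sum_row_eq_zero_of_notMem_image_fst [Fintype C] [DecidableEq R] [AddCommMonoid K]
    {S : Finset (R × C)} {y : R × C → K} (hy : Function.support y ⊆ S) {i : R}
    (hi : i ∉ S.image Prod.fst) : ∑ j, y (i, j) = 0 :=
  sum_eq_zero fun _ _ => Function.support_subset_iff'.1 hy _ <| mt (mem_image_of_mem _) hi

lemma sum_col_eq_zero_of_notMem_image_snd [Fintype R] [DecidableEq C] [AddCommMonoid K]
    {S : Finset (R × C)} {y : R × C → K} (hy : Function.support y ⊆ S) {j : C}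
    (hj : j ∉ S.image Prod.snd) : ∑ i, y (i, j) = 0 :=
  sum_eq_zero fun _ _ => Function.support_subset_iff'.1 hy _ <| mt (mem_image_of_mem _) hj

variable [Fintype R] [Fintype C]

/-- The space of tables with rows `R` and columns `C` all of whose margins, that is row sums and
column sums, are zero. -/
def zeroMarginTables (R C K : Type*) [Fintype R] [Fintype C] [Semiring K] :
    Submodule K (R × C → K) where
  carrier := {y | (∀ i, ∑ j, y (i, j) = 0) ∧ ∀ j, ∑ i, y (i, j) = 0}
  zero_mem' := by simp
  add_mem' hy hz := by simp_all [sum_add_distrib]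
  smul_mem' a y hy := by simp_all [← mul_sum]

/-- The linear map whose kernel is the space of zero-margin tables supported on `S`. Only the rows
and the columns that meet `S` are recorded, so that they can be counted against the cells of `S`. -/
def supportedMargins [DecidableEq R] [DecidableEq C] (K : Type*) [Semiring K] (S : Finset (R × C)) :
    (R × C → K) →ₗ[K]
      (S.image Prod.fst → K) × (S.image Prod.snd → K) × ((Sᶜ : Finset (R × C)) → K) :=
  (LinearMap.pi fun i => ∑ j, LinearMap.proj (i.1, j)).prod
    ((LinearMap.pi fun j => ∑ i, LinearMap.proj (i, j.1)).prod (LinearMap.funLeft K K (↑)))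

lemma supportedMargins_eq_iff [DecidableEq R] [DecidableEq C] [Semiring K] {S : Finset (R × C)}
    {y : R × C → K} {r : S.image Prod.fst → K} {c : S.image Prod.snd → K}
    {e : (Sᶜ : Finset (R × C)) → K} :
    supportedMargins K S y = (r, c, e) ↔
      (∀ i, ∑ j, y (i.1, j) = r i) ∧ (∀ j, ∑ i, y (i, j.1) = c j) ∧ ∀ p, y p.1 = e p := by
  simp [supportedMargins, LinearMap.funLeft, funext_iff]

lemma sum_image_fst_eq_sum_image_snd [DecidableEq R] [DecidableEq C] [AddCommMonoid K]
    {S : Finset (R × C)} {y : R × C → K} (hy : Function.support y ⊆ S) :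
    ∑ i ∈ S.image Prod.fst, ∑ j, y (i, j) = ∑ j ∈ S.image Prod.snd, ∑ i, y (i, j) :=
  calc
    ∑ i ∈ S.image Prod.fst, ∑ j, y (i, j) = ∑ i, ∑ j, y (i, j) :=
      sum_subset (subset_univ _) fun _ _ => sum_row_eq_zero_of_notMem_image_fst hy
    _ = ∑ j, ∑ i, y (i, j) := sum_comm
    _ = ∑ j ∈ S.image Prod.snd, ∑ i, y (i, j) :=
      (sum_subset (subset_univ _) fun _ _ => sum_col_eq_zero_of_notMem_image_snd hy).symm

lemma mem_ker_supportedMargins [DecidableEq R] [DecidableEq C] [Semiring K]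
    {S : Finset (R × C)} {y : R × C → K} :
    y ∈ LinearMap.ker (supportedMargins K S) ↔
      y ∈ zeroMarginTables R C K ∧ Function.support y ⊆ S := by
  refine LinearMap.mem_ker.trans (supportedMargins_eq_iff.trans ⟨?_, ?_⟩)
  · rintro ⟨hrow, hcol, hcompl⟩
    have hsupp : Function.support y ⊆ S :=
      Function.support_subset_iff'.2 fun p hp => hcompl ⟨p, mem_compl.2 hp⟩
    refine ⟨⟨fun i => ?_, fun j => ?_⟩, hsupp⟩
    · by_cases hi : i ∈ S.image Prod.fst
      · exact hrow ⟨i, hi⟩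
      · exact sum_row_eq_zero_of_notMem_image_fst hsupp hi
    · by_cases hj : j ∈ S.image Prod.snd
      · exact hcol ⟨j, hj⟩
      · exact sum_col_eq_zero_of_notMem_image_snd hsupp hj
  · rintro ⟨⟨hrow, hcol⟩, hsupp⟩
    exact ⟨fun i => hrow i, fun j => hcol j,
      fun p => Function.support_subset_iff'.1 hsupp p (mem_compl.1 p.2)⟩

lemma range_supportedMargins_ne_top [DecidableEq R] [DecidableEq C] [Semiring K] [Nontrivial K]
    {S : Finset (R × C)} (hS : S.Nonempty) : LinearMap.range (supportedMargins K S) ≠ ⊤ := by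
  intro htop
  obtain ⟨i, hi⟩ := hS.image Prod.fst
  -- A table on `S` with a single nonzero row sum and zero column sums would have two totals.
  obtain ⟨y, hy⟩ := LinearMap.range_eq_top.1 htop (Pi.single ⟨i, hi⟩ 1, 0, 0)
  obtain ⟨hrow, hcol, hcompl⟩ := supportedMargins_eq_iff.1 hy
  have htotal := sum_image_fst_eq_sum_image_snd (y := y)
    (Function.support_subset_iff'.2 fun p hp => hcompl ⟨p, mem_compl.2 hp⟩)
  rw [← sum_coe_sort, ← sum_coe_sort (S.image Prod.snd)] at htotal
  simp [hrow, hcol] at htotal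

lemma exists_mem_zeroMarginTables_support_subset [DivisionRing K] {S : Finset (R × C)}
    (hS : S.Nonempty)
    (hrow : ∀ p ∈ S, ∃ p' ∈ S, p' ≠ p ∧ p'.1 = p.1)
    (hcol : ∀ p ∈ S, ∃ p' ∈ S, p' ≠ p ∧ p'.2 = p.2) :
    ∃ y ∈ zeroMarginTables R C K, y ≠ 0 ∧ Function.support y ⊆ S := by
  classical
  have hdim : Module.finrank K ((S.image Prod.fst → K) × (S.image Prod.snd → K) ×
      ((Sᶜ : Finset (R × C)) → K)) ≤ Module.finrank K (R × C → K) := by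
    have := two_mul_card_image_le_card hrow
    have := two_mul_card_image_le_card hcol
    have := card_compl_add_card S
    simp only [Module.finrank_prod, Module.finrank_fintype_fun_eq_card, Fintype.card_coe]
    omega
  obtain ⟨y, hy, hy₀⟩ := Submodule.exists_mem_ne_zero_of_ne_bot
    (ker_ne_bot_of_range_ne_top_of_finrank_le (range_supportedMargins_ne_top hS) hdim)
  obtain ⟨hzero, hsupp⟩ := mem_ker_supportedMargins.1 hy
  exact ⟨y, hzero, hy₀, hsupp⟩

lemma exists_mem_zeroMarginTables_support_subset_fractionalSupport [DivisionRing K]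
    {x : R × C → K} (hx : x ∈ zeroMarginTables R C K) (hne : (fractionalSupport x).Nonempty) :
    ∃ y ∈ zeroMarginTables R C K, y ≠ 0 ∧ Function.support y ⊆ fractionalSupport x := by
  obtain ⟨S, hS⟩ := (fractionalSupport x).toFinite.exists_finset_coe
  have hmem (p : R × C) : p ∈ S ↔ x p ∉ (Int.castAddHom K).range := by
    rw [← mem_coe, hS]
    rfl
  rw [← hS] at hne ⊢
  refine exists_mem_zeroMarginTables_support_subset hne (fun ⟨i, j⟩ hp => ?_) fun ⟨i, j⟩ hp => ?_
  · obtain ⟨k, hkj, hk⟩ := exists_ne_notMem_of_sum_mem (x := fun j => x (i, j))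
      (hx.1 i ▸ zero_mem _) ((hmem _).1 hp)
    exact ⟨(i, k), (hmem _).2 hk, by simpa using hkj, rfl⟩
  · obtain ⟨k, hki, hk⟩ := exists_ne_notMem_of_sum_mem (x := fun i => x (i, j))
      (hx.2 j ▸ zero_mem _) ((hmem _).1 hp)
    exact ⟨(k, j), (hmem _).2 hk, by simpa using hki, rfl⟩

/-- The table `x` extended by a row `none` and a column `none` that hold the negatives of its
column sums and row sums, and the total of `x` in the corner, so that every margin is zero. -/
def borderedTable [AddCommGroup K] (x : R → C → K) : Option R × Option C → K
  | (some i, some j) => x i j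
  | (some i, none) => -∑ j, x i j
  | (none, some j) => -∑ i, x i j
  | (none, none) => ∑ i, ∑ j, x i j

lemma borderedTable_mem_zeroMarginTables [Ring K] (x : R → C → K) :
    borderedTable x ∈ zeroMarginTables (Option R) (Option C) K := by
  constructor
  · rintro (_ | i)
    · simp [borderedTable, Fintype.sum_option, sum_comm (f := x)]
    · simp [borderedTable, Fintype.sum_option]
  · rintro (_ | j) <;> simp [borderedTable, Fintype.sum_option]

theorem exists_controlled_rounding [Field K] [LinearOrder K] [IsStrictOrderedRing K] [FloorRing K]
    (x : R → C → K) :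
    ∃ z : R → C → ℤ, (∀ i j, z i j ∈ Set.Icc ⌊x i j⌋ ⌈x i j⌉) ∧
      (∀ i, ∑ j, z i j ∈ Set.Icc ⌊∑ j, x i j⌋ ⌈∑ j, x i j⌉) ∧
      ∀ j, ∑ i, z i j ∈ Set.Icc ⌊∑ i, x i j⌋ ⌈∑ i, x i j⌉ := by
  obtain ⟨z, ⟨hrow, hcol⟩, hz⟩ := exists_int_rounding_mem_submodule
    (fun _ hy => exists_mem_zeroMarginTables_support_subset_fractionalSupport hy)
    (borderedTable_mem_zeroMarginTables x)
  refine ⟨fun i j => z (some i, some j), fun i j => hz (some i, some j), fun i => ?_, fun j => ?_⟩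
  · have hsum := hrow (some i)
    simp only [Fintype.sum_option] at hsum
    exact mem_Icc_floor_ceil_of_add_eq_zero (mod_cast hsum) (hz (some i, none))
  · have hsum := hcol (some j)
    simp only [Fintype.sum_option] at hsum
    exact mem_Icc_floor_ceil_of_add_eq_zero (mod_cast hsum) (hz (none, some j))

end Tables

/-- For every single-period reservation problem there exists a
period-1 reservation table whose every internal entry is the floor or the ceiling
of the corresponding department fair share and whose every column total is the
floor or the ceiling of the corresponding university fair share. -/
theorem single_period_deterministic_within_quota
    (D C : Type) [Fintype D] [Fintype C]
    (hD : 2 ≤ Fintype.card D) (hC : 2 ≤ Fintype.card C)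
    (α : C → ℝ) (hα0 : ∀ j, 0 < α j) (hα1 : ∀ j, α j < 1)
    (hαsum : ∑ j, α j = 1)
    (q : D → ℕ) :
    ∃ Z : D → C → ℕ,
      (∀ i, ∑ j, Z i j = q i) ∧
      (∀ i j, (Z i j : ℤ) = ⌊α j * (q i : ℝ)⌋ ∨ (Z i j : ℤ) = ⌈α j * (q i : ℝ)⌉) ∧
      (∀ j, ((∑ i, Z i j : ℕ) : ℤ) = ⌊α j * ((∑ i, q i : ℕ) : ℝ)⌋ ∨
            ((∑ i, Z i j : ℕ) : ℤ) = ⌈α j * ((∑ i, q i : ℕ) : ℝ)⌉) := by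
  obtain ⟨z, hz, hrow, hcol⟩ := exists_controlled_rounding fun i j => α j * (q i : ℝ)
  simp only [← sum_mul, ← mul_sum, hαsum, one_mul, ← Nat.cast_sum] at hrow hcol
  have hz₀ : ∀ i j, 0 ≤ z i j := fun i j =>
    (Int.floor_nonneg.2 (mul_nonneg (hα0 j).le (q i).cast_nonneg)).trans (hz i j).1
  lift z to D → C → ℕ using hz₀
  refine ⟨z, fun i => ?_, fun i j => eq_floor_or_eq_ceil_of_mem_Icc (hz i j), fun j => ?_⟩
  · have hsum : ∑ j, (z i j : ℤ) = q i := by simpa using hrow i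
    exact_mod_cast hsum
  · rw [Nat.cast_sum]
    exact eq_floor_or_eq_ceil_of_mem_Icc (hcol j)
end

section
/- For every reservation problem over a finite horizon T there exists a lottery solution (a finitely supported probability distribution over monotone sequences (Z^1,…,Z^T) of reservation tables) which is unbiased (E[Z^t_{ij}] = α_j·Q_i^t for all t, i, j), stays within department quota (almost surely Z^t_{ij} ∈ {⌊α_j·Q_i^t⌋, ⌈α_j·Q_i^t⌉} for all t, i, j), and such that the family of random vectors ((Z^t_{ij})_{t ≤ T, j ∈ C})_{i∈D}, indexed by departments i ∈ D, is mutually independent. -/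
open Finset

/-- Period-`t` cumulative vacancy count of department `i`: `Q_i^t = ∑_{s ≤ t} q_i^s`. -/
def cumQ {D : Type} {T : ℕ} (q : Fin T → D → ℕ) (t : Fin T) (i : D) : ℕ :=
  ∑ s ∈ Finset.univ.filter (fun s : Fin T => s ≤ t), q s i

/-!
A department uses up its vacancies in order, so it is enough to randomize the *roster* that assigns
a category to every vacancy, independently for each department.

To build a random roster of length `K`, cut the shares accrued by category `j` into unit intervals,
the seats `(l, j)`. The length of the interval `(l, j)` that vacancy `s` fills is the entry of a
matrix whose rows sum to `1` and whose columns sum to at most `1`. By Birkhoff's theorem it is a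
convex combination of embeddings of the vacancies into the seats. After `k` vacancies, a seat whose
interval has been filled is almost surely occupied and a seat whose interval is still empty is
almost surely vacant, so only the seat being filled is random, which is the quota condition.
-/

section Lottery

variable {𝕜 Ω Ω' : Type*} [Field 𝕜] [LinearOrder 𝕜] [IsStrictOrderedRing 𝕜] [Fintype Ω]
  [Fintype Ω']

lemma sum_filter_map_stdSimplex (w : stdSimplex 𝕜 Ω) (f : Ω → Ω') (P : Ω' → Prop)
    [DecidablePred P] :
    ∑ y with P y, stdSimplex.map f w y = ∑ x with P (f x), w x := by
  classical
  simp_rw [stdSimplex.map_coe, FunOnFinite.linearMap_apply_apply]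
  exact (sum_fiberwise_eq_sum_filter univ _ f w).trans (by simp_rw [mem_filter_univ])

lemma sum_map_stdSimplex_mul (w : stdSimplex 𝕜 Ω) (f : Ω → Ω') (g : Ω' → 𝕜) :
    ∑ y, stdSimplex.map f w y * g y = ∑ x, w x * g (f x) := by
  classical
  simp_rw [stdSimplex.map_coe, FunOnFinite.linearMap_apply_apply, sum_mul]
  rw [← sum_fiberwise univ f]
  exact sum_congr rfl fun y _ => sum_congr rfl fun x hx => by rw [(mem_filter.1 hx).2]

lemma exists_ne_zero_of_map_stdSimplex_ne_zero {w : stdSimplex 𝕜 Ω} {f : Ω → Ω'} {y : Ω'}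
    (h : stdSimplex.map f w y ≠ 0) : ∃ x, w x ≠ 0 ∧ f x = y := by
  classical
  rw [stdSimplex.map_coe, FunOnFinite.linearMap_apply_apply] at h
  obtain ⟨x, hx, hwx⟩ := exists_ne_zero_of_sum_ne_zero h
  exact ⟨x, hwx, (mem_filter.1 hx).2⟩

lemma eq_of_sum_mul_eq_of_le {w : stdSimplex 𝕜 Ω} {X : Ω → 𝕜} {c : 𝕜} (hX : ∀ ω, X ω ≤ c)
    (hmean : ∑ ω, w ω * X ω = c) {ω : Ω} (hω : w ω ≠ 0) : X ω = c := by
  have hsum : ∑ ω, w ω * X ω = ∑ ω, w ω * c := by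
    rw [hmean, ← sum_mul, stdSimplex.sum_eq_one, one_mul]
  have hle : ∀ ω ∈ univ, w ω * X ω ≤ w ω * c := fun ω _ =>
    mul_le_mul_of_nonneg_left (hX ω) (stdSimplex.zero_le w ω)
  exact mul_left_cancel₀ hω ((sum_eq_sum_iff_of_le hle).1 hsum ω (mem_univ ω))

lemma eq_of_sum_mul_eq_of_ge {w : stdSimplex 𝕜 Ω} {X : Ω → 𝕜} {c : 𝕜} (hX : ∀ ω, c ≤ X ω)
    (hmean : ∑ ω, w ω * X ω = c) {ω : Ω} (hω : w ω ≠ 0) : X ω = c :=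
  neg_injective <| eq_of_sum_mul_eq_of_le (X := fun ω => -X ω) (fun ω => neg_le_neg (hX ω))
    (by simp [hmean]) hω

end Lottery

section ProductLottery

variable {𝕜 ι : Type*} [Field 𝕜] [LinearOrder 𝕜] [IsStrictOrderedRing 𝕜] [Fintype ι]
  [DecidableEq ι] {Ω : ι → Type*} [∀ i, Fintype (Ω i)]

/-- The product of finitely many lotteries: the coordinates are drawn independently. -/
def productLottery (w : ∀ i, stdSimplex 𝕜 (Ω i)) : stdSimplex 𝕜 (∀ i, Ω i) :=
  ⟨fun a => ∏ i, w i (a i), fun _ => prod_nonneg fun i _ => stdSimplex.zero_le (w i) _, by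
    simp [← Fintype.prod_sum]⟩

lemma productLottery_apply (w : ∀ i, stdSimplex 𝕜 (Ω i)) (a : ∀ i, Ω i) :
    productLottery w a = ∏ i, w i (a i) :=
  rfl

lemma sum_piFinset_productLottery (w : ∀ i, stdSimplex 𝕜 (Ω i)) (S : ∀ i, Finset (Ω i)) :
    ∑ a ∈ Fintype.piFinset S, productLottery w a = ∏ i, ∑ ω ∈ S i, w i ω :=
  (prod_univ_sum S fun i => w i).symm

lemma map_eval_productLottery (w : ∀ i, stdSimplex 𝕜 (Ω i)) (i : ι) :
    stdSimplex.map (fun a => a i) (productLottery w) = w i := by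
  classical
  ext ω
  have hfiber : ({a | a i = ω} : Finset (∀ i, Ω i))
      = Fintype.piFinset (Function.update (fun _ => univ) i {ω}) := by
    simp [Fintype.piFinset_update_singleton_eq_filter_piFinset_eq]
  rw [stdSimplex.map_coe, FunOnFinite.linearMap_apply_apply, hfiber, sum_piFinset_productLottery,
    Fintype.prod_eq_single i fun i' hi' => by simp [hi']]
  simp

lemma sum_filter_forall_productLottery (w : ∀ i, stdSimplex 𝕜 (Ω i)) (P : ∀ i, Ω i → Prop)
    [∀ i, DecidablePred (P i)] :
    ∑ a with ∀ i, P i (a i), productLottery w a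
      = ∏ i, ∑ a with P i (a i), productLottery w a := by
  have hbox : ({a | ∀ i, P i (a i)} : Finset (∀ i, Ω i))
      = Fintype.piFinset fun i => {ω | P i ω} := by
    ext; simp
  rw [hbox, sum_piFinset_productLottery]
  refine prod_congr rfl fun i _ => ?_
  rw [← sum_filter_map_stdSimplex (productLottery w) (fun a => a i) (P i), map_eval_productLottery]

end ProductLottery

section Birkhoff

variable {𝕜 m n : Type*} [Field 𝕜] [LinearOrder 𝕜] [IsStrictOrderedRing 𝕜] [Fintype m]
  [Fintype n] [DecidableEq n]

lemma exists_perm_lottery_of_mem_doublyStochastic {P : Matrix n n 𝕜}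
    (hP : P ∈ doublyStochastic 𝕜 n) :
    ∃ w : stdSimplex 𝕜 (Equiv.Perm n), ∀ x y, ∑ σ with σ x = y, w σ = P x y := by
  obtain ⟨w, hw₀, hw₁, rfl⟩ := exists_eq_sum_perm_of_mem_doublyStochastic hP
  refine ⟨⟨w, hw₀, hw₁⟩, fun x y => ?_⟩
  simp only [Matrix.sum_apply, Matrix.smul_apply, Equiv.Perm.permMatrix, PEquiv.toMatrix_apply,
    Equiv.toPEquiv_apply, Option.mem_some_iff, smul_eq_mul, mul_ite, mul_one, mul_zero, sum_filter]
  rfl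

variable {M : Matrix m n 𝕜}

/-- The added rows share the column deficits equally. -/
lemma exists_doublyStochastic_row_eq (hM : ∀ x y, 0 ≤ M x y) (hrow : ∀ x, ∑ y, M x y = 1)
    (hcol : ∀ y, ∑ x, M x y ≤ 1) :
    ∃ (i : m ↪ n), ∃ P ∈ doublyStochastic 𝕜 n, ∀ x y, P (i x) y = M x y := by
  have htotal : ∑ y, ∑ x, M x y = Fintype.card m := by rw [sum_comm]; simp [hrow]
  have hcard : Fintype.card m ≤ Fintype.card n := by
    have : ∑ y, ∑ x, M x y ≤ ∑ _y : n, (1 : 𝕜) := sum_le_sum fun y _ => hcol y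
    rw [htotal] at this
    simpa using this
  obtain ⟨d, hd⟩ := Nat.exists_eq_add_of_le hcard
  have hdeficit : ∑ y, (1 - ∑ x, M x y) = d := by
    rw [sum_sub_distrib, htotal]
    simp [hd]
  let ε : m ⊕ Fin d ≃ n := Fintype.equivOfCardEq (by simp [hd])
  let P : Matrix n n 𝕜 := fun z y =>
    Sum.elim (fun x => M x y) (fun _ => (1 - ∑ x, M x y) / d) (ε.symm z)
  have hP_inl (x : m) (y : n) : P (ε (.inl x)) y = M x y := by simp [P]
  have hP_inr (c : Fin d) (y : n) : P (ε (.inr c)) y = (1 - ∑ x, M x y) / d := by simp [P]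
  refine ⟨Function.Embedding.inl.trans ε.toEmbedding, P, mem_doublyStochastic_iff_sum.2
    ⟨ε.surjective.forall.2 ?_, ε.surjective.forall.2 ?_, fun y => ?_⟩, hP_inl⟩
  · rintro (x | c) y
    · simpa only [hP_inl] using hM x y
    · simpa only [hP_inr] using div_nonneg (sub_nonneg.2 (hcol y)) d.cast_nonneg
  · rintro (x | c)
    · simpa only [hP_inl] using hrow x
    · simp_rw [hP_inr, ← sum_div, hdeficit]
      exact div_self (Nat.cast_ne_zero.2 c.pos.ne')
  · have hfull : (d : 𝕜) = 0 → 1 - ∑ x, M x y = 0 := fun h0 =>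
      (sum_eq_zero_iff_of_nonneg fun y _ => sub_nonneg.2 (hcol y)).1 (hdeficit.trans h0) y
        (mem_univ y)
    simp_rw [← ε.sum_comp, Fintype.sum_sum_type, hP_inl, hP_inr]
    simp [mul_div_cancel_of_imp' hfull]

lemma exists_embedding_lottery (hM : ∀ x y, 0 ≤ M x y) (hrow : ∀ x, ∑ y, M x y = 1)
    (hcol : ∀ y, ∑ x, M x y ≤ 1) :
    ∃ w : stdSimplex 𝕜 (m ↪ n), ∀ x y, ∑ e with e x = y, w e = M x y := by
  obtain ⟨i, P, hP, hPM⟩ := exists_doublyStochastic_row_eq hM hrow hcol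
  obtain ⟨w, hw⟩ := exists_perm_lottery_of_mem_doublyStochastic hP
  exact ⟨stdSimplex.map (fun σ => i.trans σ.toEmbedding) w, fun x y =>
    (sum_filter_map_stdSimplex w _ _).trans <| (hw (i x) y).trans (hPM x y)⟩

end Birkhoff

section CountBefore

variable {X Y : Type*} [DecidableEq X] [DecidableEq Y] {K : ℕ}

/-- The first `k` slots of a sequence of length `K`; slots are numbered from `0`. -/
def slotsBefore (K k : ℕ) : Finset (Fin K) := {s | (s : ℕ) < k}

lemma sum_slotsBefore {M : Type*} [AddCommMonoid M] {k : ℕ} (hk : k ≤ K) (f : ℕ → M) :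
    ∑ s ∈ slotsBefore K k, f s = ∑ s ∈ range k, f s := by
  have hrange : (range K).filter (· < k) = range k := by ext; simp; omega
  rw [slotsBefore, sum_filter, Fin.sum_univ_eq_sum_range fun s => if s < k then f s else 0,
    ← sum_filter, hrange]

lemma card_slotsBefore {k : ℕ} (hk : k ≤ K) : #(slotsBefore K k) = k := by
  rw [slotsBefore, Fin.card_filter_val_lt, min_eq_right hk]

lemma slotsBefore_self : slotsBefore K K = univ := by
  simp [slotsBefore]

lemma slotsBefore_mono : Monotone (slotsBefore K) := fun _ _ h =>
  monotone_filter_right _ fun _ _ hs => hs.trans_le h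

/-- The number of the first `k` slots that `r` assigns to `y`. -/
def countBefore (r : Fin K → Y) (k : ℕ) (y : Y) : ℕ :=
  #{s ∈ slotsBefore K k | r s = y}

lemma countBefore_mono (r : Fin K → Y) (y : Y) : Monotone fun k => countBefore r k y :=
  fun _ _ h => card_le_card (filter_subset_filter _ (slotsBefore_mono h))

lemma sum_countBefore [Fintype Y] (r : Fin K → Y) {k : ℕ} (hk : k ≤ K) :
    ∑ y, countBefore r k y = k := by
  have hfiber : #(slotsBefore K k) = ∑ y, countBefore r k y :=
    card_eq_sum_card_fiberwise fun _ _ => mem_univ _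
  rw [← hfiber, card_slotsBefore hk]

lemma countBefore_le_one {r : Fin K → Y} (hr : Function.Injective r) (k : ℕ) (y : Y) :
    countBefore r k y ≤ 1 :=
  card_le_one.2 fun _ hs _ hs' => hr ((mem_filter.1 hs).2.trans (mem_filter.1 hs').2.symm)

lemma countBefore_snd [Fintype X] (r : Fin K → X × Y) (k : ℕ) (y : Y) :
    countBefore (fun s => (r s).2) k y = ∑ x, countBefore r k (x, y) := by
  rw [countBefore, card_eq_sum_card_fiberwise (t := (univ : Finset X)) (f := fun s => (r s).1)
    fun _ _ => mem_univ _]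
  simp_rw [filter_filter, countBefore, Prod.ext_iff, and_comm]

lemma sum_mul_countBefore {𝕜 Ω : Type*} [Semiring 𝕜] [Fintype Ω] (w : Ω → 𝕜)
    (r : Ω → Fin K → Y) (k : ℕ) (y : Y) :
    ∑ ω, w ω * countBefore (r ω) k y = ∑ s ∈ slotsBefore K k, ∑ ω with r ω s = y, w ω := by
  simp_rw [countBefore, card_filter, Nat.cast_sum, mul_sum, sum_filter]
  rw [sum_comm]
  simp

end CountBefore

section SeatFill

variable {𝕜 : Type*} [Field 𝕜] [LinearOrder 𝕜] [IsStrictOrderedRing 𝕜]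

/-- The length of the part of the `l`-th seat, the interval `[l, l + 1]`, that lies below `y`. -/
def seatFill (l : ℕ) (y : 𝕜) : 𝕜 := min y (l + 1) - min y l

lemma seatFill_mono (l : ℕ) : Monotone (seatFill l : 𝕜 → 𝕜) := fun x y _ => by
  grind [seatFill]

lemma seatFill_of_le {l : ℕ} {y : 𝕜} (h : y ≤ l) : seatFill l y = 0 := by
  grind [seatFill]

lemma seatFill_of_ge {l : ℕ} {y : 𝕜} (h : (l : 𝕜) + 1 ≤ y) : seatFill l y = 1 := by
  grind [seatFill]

lemma seatFill_nonneg (l : ℕ) (y : 𝕜) : 0 ≤ seatFill l y := by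
  grind [seatFill]

lemma seatFill_le_one (l : ℕ) (y : 𝕜) : seatFill l y ≤ 1 := by
  grind [seatFill]

lemma sum_seatFill {y : 𝕜} {K : ℕ} (hy : 0 ≤ y) (hyK : y ≤ K) :
    ∑ l : Fin K, seatFill l y = y := by
  have htelescope := sum_range_sub (fun l : ℕ => min y (l : 𝕜)) K
  rw [Fin.sum_univ_eq_sum_range fun l => seatFill l y]
  simpa [seatFill, hy, hyK] using htelescope

lemma sum_mem_Icc_floor_ceil_of_seats [FloorRing 𝕜] {K : ℕ} {x : 𝕜} (hx : 0 ≤ x) (hxK : x ≤ K)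
    {N : Fin K → ℕ} (hN : ∀ l, N l ≤ 1) (hfull : ∀ l : Fin K, (l : 𝕜) + 1 ≤ x → N l = 1)
    (hempty : ∀ l : Fin K, x ≤ l → N l = 0) :
    ((∑ l, N l : ℕ) : ℤ) ∈ Set.Icc ⌊x⌋ ⌈x⌉ := by
  have hlower (l : Fin K) : seatFill l (⌊x⌋ : 𝕜) ≤ N l := by
    rcases le_or_gt ((l : ℤ) + 1) ⌊x⌋ with h | h
    · rw [hfull l (by simpa using Int.le_floor.1 h), Nat.cast_one]
      exact seatFill_le_one _ _
    · rw [seatFill_of_le (by exact_mod_cast Int.lt_add_one_iff.1 h)]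
      exact Nat.cast_nonneg _
  have hupper (l : Fin K) : (N l : 𝕜) ≤ seatFill l (⌈x⌉ : 𝕜) := by
    rcases le_or_gt x l with h | h
    · rw [hempty l h, Nat.cast_zero]
      exact seatFill_nonneg _ _
    · have hl : (l : ℤ) < ⌈x⌉ := Int.lt_ceil.2 (by exact_mod_cast h)
      rw [seatFill_of_ge (by exact_mod_cast Int.add_one_le_of_lt hl)]
      exact Nat.cast_le_one.2 (hN l)
  have hfloor : ∑ l : Fin K, seatFill l (⌊x⌋ : 𝕜) = ⌊x⌋ :=
    sum_seatFill (Int.cast_nonneg (Int.floor_nonneg.2 hx)) ((Int.floor_le x).trans hxK)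
  have hceil : ∑ l : Fin K, seatFill l (⌈x⌉ : 𝕜) = ⌈x⌉ :=
    sum_seatFill (Int.cast_nonneg (Int.ceil_nonneg hx))
      (by exact_mod_cast Int.ceil_le.2 (show x ≤ ((K : ℤ) : 𝕜) by exact_mod_cast hxK))
  constructor
  · have : (⌊x⌋ : 𝕜) ≤ ∑ l, (N l : 𝕜) := hfloor ▸ sum_le_sum fun l _ => hlower l
    exact_mod_cast this
  · have : ∑ l, (N l : 𝕜) ≤ ⌈x⌉ := hceil ▸ sum_le_sum fun l _ => hupper l
    exact_mod_cast this

end SeatFill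

section CumShare

variable {𝕜 C : Type*} [Field 𝕜]

/-- The fair share of category `j` in the first `k` slots when slot `s` has the reservation scheme
`β s`. For a constant scheme `α` it is `α j * k`. -/
def cumShare (β : ℕ → C → 𝕜) (k : ℕ) (j : C) : 𝕜 := ∑ s ∈ range k, β s j

lemma cumShare_const (α : C → 𝕜) (k : ℕ) (j : C) : cumShare (fun _ => α) k j = α j * k := by
  simp [cumShare, mul_comm]

lemma cumShare_succ_sub (β : ℕ → C → 𝕜) (k : ℕ) (j : C) :
    cumShare β (k + 1) j - cumShare β k j = β k j := by
  rw [cumShare, sum_range_succ, cumShare, add_sub_cancel_left]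

variable [LinearOrder 𝕜] [IsStrictOrderedRing 𝕜] [Fintype C] {β : ℕ → C → 𝕜}

lemma cumShare_mono (hβ : ∀ s, β s ∈ stdSimplex 𝕜 C) (j : C) :
    Monotone fun k => cumShare β k j := fun _ _ h =>
  sum_le_sum_of_subset_of_nonneg (range_mono h) fun s _ _ => (hβ s).1 j

lemma cumShare_mem_Icc (hβ : ∀ s, β s ∈ stdSimplex 𝕜 C) (k : ℕ) (j : C) :
    cumShare β k j ∈ Set.Icc 0 (k : 𝕜) := by
  refine ⟨sum_nonneg fun s _ => (hβ s).1 j, ?_⟩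
  calc cumShare β k j ≤ ∑ _s ∈ range k, 1 :=
        sum_le_sum fun s _ => (mem_Icc_of_mem_stdSimplex (hβ s) j).2
    _ = (k : 𝕜) := by simp

lemma sum_seatFill_cumShare (hβ : ∀ s, β s ∈ stdSimplex 𝕜 C) {k K : ℕ} (hk : k ≤ K) (j : C) :
    ∑ l : Fin K, seatFill l (cumShare β k j) = cumShare β k j :=
  have ⟨h₀, h₁⟩ := cumShare_mem_Icc hβ k j
  sum_seatFill h₀ (h₁.trans (Nat.cast_le.2 hk))

end CumShare

section SeatMatrix

variable {𝕜 C : Type*} [Field 𝕜] [LinearOrder 𝕜]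

/-- The fractional assignment of `K` slots to the seats `(l, j)`, the `l`-th seat of category `j`:
slot `s` fills the part of the seat between the fair shares of `j` before and after `s`. -/
def seatMatrix (β : ℕ → C → 𝕜) (K : ℕ) : Matrix (Fin K) (Fin K × C) 𝕜 := fun s y =>
  seatFill y.1 (cumShare β (s + 1) y.2) - seatFill y.1 (cumShare β s y.2)

variable [IsStrictOrderedRing 𝕜]

lemma sum_slotsBefore_seatMatrix (β : ℕ → C → 𝕜) {k K : ℕ} (hk : k ≤ K) (y : Fin K × C) :
    ∑ s ∈ slotsBefore K k, seatMatrix β K s y = seatFill y.1 (cumShare β k y.2) := by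
  have hstart : seatFill y.1 (cumShare β 0 y.2) = 0 := seatFill_of_le (by simp [cumShare])
  simp_rw [seatMatrix]
  rw [sum_slotsBefore hk fun s =>
      seatFill y.1 (cumShare β (s + 1) y.2) - seatFill y.1 (cumShare β s y.2),
    sum_range_sub fun s => seatFill y.1 (cumShare β s y.2), hstart, sub_zero]

lemma sum_col_seatMatrix_le_one (β : ℕ → C → 𝕜) {K : ℕ} (y : Fin K × C) :
    ∑ s, seatMatrix β K s y ≤ 1 := by
  rw [← slotsBefore_self, sum_slotsBefore_seatMatrix β le_rfl]
  exact seatFill_le_one _ _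

variable [Fintype C] {β : ℕ → C → 𝕜}

lemma seatMatrix_nonneg (hβ : ∀ s, β s ∈ stdSimplex 𝕜 C) {K : ℕ} (s : Fin K) (y : Fin K × C) :
    0 ≤ seatMatrix β K s y :=
  sub_nonneg.2 (seatFill_mono _ (cumShare_mono hβ _ (Nat.le_succ _)))

lemma sum_row_seatMatrix (hβ : ∀ s, β s ∈ stdSimplex 𝕜 C) {K : ℕ} (s : Fin K) :
    ∑ y, seatMatrix β K s y = 1 := by
  have hcategory (j : C) : ∑ l, seatMatrix β K s (l, j) = β s j := by
    simp_rw [seatMatrix, sum_sub_distrib]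
    rw [sum_seatFill_cumShare hβ s.2, sum_seatFill_cumShare hβ s.2.le, cumShare_succ_sub]
  rw [Fintype.sum_prod_type_right]
  simp_rw [hcategory, (hβ s).2]

end SeatMatrix

section RandomRoster

variable {𝕜 C : Type*} [Field 𝕜] [LinearOrder 𝕜] [IsStrictOrderedRing 𝕜] [Fintype C]
  [DecidableEq C] {β : ℕ → C → 𝕜}

lemma exists_random_seating (hβ : ∀ s, β s ∈ stdSimplex 𝕜 C) (K : ℕ) :
    ∃ w : stdSimplex 𝕜 (Fin K ↪ Fin K × C), ∀ k ≤ K, ∀ y,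
      ∑ e, w e * countBefore e k y = seatFill y.1 (cumShare β k y.2) := by
  obtain ⟨w, hw⟩ := exists_embedding_lottery (seatMatrix_nonneg hβ) (sum_row_seatMatrix hβ)
    (sum_col_seatMatrix_le_one β (K := K))
  refine ⟨w, fun k hk y => ?_⟩
  simp_rw [sum_mul_countBefore, hw, sum_slotsBefore_seatMatrix β hk]

lemma exists_random_roster [FloorRing 𝕜] (hβ : ∀ s, β s ∈ stdSimplex 𝕜 C) (K : ℕ) :
    ∃ w : stdSimplex 𝕜 (Fin K → C),
      (∀ r, w r ≠ 0 → ∀ k ≤ K, ∀ j,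
        (countBefore r k j : ℤ) ∈ Set.Icc ⌊cumShare β k j⌋ ⌈cumShare β k j⌉) ∧
      ∀ k ≤ K, ∀ j, ∑ r, w r * countBefore r k j = cumShare β k j := by
  obtain ⟨w, hmean⟩ := exists_random_seating hβ K
  refine ⟨stdSimplex.map (fun e s => (e s).2) w, fun r hr k hk j => ?_, fun k hk j => ?_⟩
  · obtain ⟨e, he, rfl⟩ := exists_ne_zero_of_map_stdSimplex_ne_zero hr
    have hle (e : Fin K ↪ Fin K × C) (l : Fin K) : countBefore e k (l, j) ≤ 1 :=
      countBefore_le_one e.injective k (l, j)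
    have ⟨h₀, h₁⟩ := cumShare_mem_Icc hβ k j
    rw [countBefore_snd]
    refine sum_mem_Icc_floor_ceil_of_seats h₀ (h₁.trans (Nat.cast_le.2 hk)) (hle e)
      (fun l hl => ?_) fun l hl => ?_
    · have hone : ∑ e, w e * (countBefore e k (l, j) : 𝕜) = 1 :=
        (hmean k hk (l, j)).trans (seatFill_of_ge hl)
      exact_mod_cast eq_of_sum_mul_eq_of_le (fun e => Nat.cast_le_one.2 (hle e l)) hone he
    · have hzero : ∑ e, w e * (countBefore e k (l, j) : 𝕜) = 0 :=
        (hmean k hk (l, j)).trans (seatFill_of_le hl)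
      exact_mod_cast eq_of_sum_mul_eq_of_ge (fun e => Nat.cast_nonneg _) hzero he
  · rw [sum_map_stdSimplex_mul]
    simp_rw [countBefore_snd, Nat.cast_sum, mul_sum]
    rw [sum_comm, sum_congr rfl fun l _ => hmean k hk (l, j), sum_seatFill_cumShare hβ hk]

end RandomRoster

lemma eq_floor_or_eq_ceil_of_mem_Icc_s8 {𝕜 : Type*} [Ring 𝕜] [LinearOrder 𝕜] [FloorRing 𝕜]
    {x : 𝕜} {z : ℤ} (hz : z ∈ Set.Icc ⌊x⌋ ⌈x⌉) : z = ⌊x⌋ ∨ z = ⌈x⌉ := by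
  have := Int.ceil_le_floor_add_one x
  have := hz.1
  have := hz.2
  omega

section CumQ

variable {D : Type} {T : ℕ} (q : Fin T → D → ℕ)

lemma cumQ_mono (i : D) : Monotone fun t => cumQ q t i := fun _ _ h =>
  sum_le_sum_of_subset <| monotone_filter_right _ fun _ _ hs => hs.trans h

lemma cumQ_le_sum [Fintype D] (t : Fin T) (i : D) : cumQ q t i ≤ ∑ i, ∑ s, q s i :=
  (sum_le_sum_of_subset (filter_subset _ _)).trans
    (single_le_sum (f := fun i => ∑ s, q s i) (fun _ _ => Nat.zero_le _) (mem_univ i))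

end CumQ

theorem lottery_with_independent_departments_general {𝕜 : Type*} [Field 𝕜] [LinearOrder 𝕜]
    [IsStrictOrderedRing 𝕜] [FloorRing 𝕜] {D : Type} {C : Type*} [Fintype D] [Fintype C]
    {β : D → ℕ → C → 𝕜} (hβ : ∀ i s, β i s ∈ stdSimplex 𝕜 C) {T : ℕ} (q : Fin T → D → ℕ) :
    ∃ (N : ℕ) (p : Fin N → 𝕜) (Z : Fin N → Fin T → D → C → ℕ),
      (∀ a, 0 ≤ p a) ∧ (∑ a, p a = 1) ∧
      (∀ a t i, ∑ j, Z a t i j = cumQ q t i) ∧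
      (∀ a (t t' : Fin T), t ≤ t' → ∀ i j, Z a t i j ≤ Z a t' i j) ∧
      (∀ a, p a ≠ 0 → ∀ t i j,
        (Z a t i j : ℤ) = ⌊cumShare (β i) (cumQ q t i) j⌋ ∨
        (Z a t i j : ℤ) = ⌈cumShare (β i) (cumQ q t i) j⌉) ∧
      (∀ t i j, ∑ a, p a * (Z a t i j : 𝕜) = cumShare (β i) (cumQ q t i) j) ∧
      (∀ v : D → Fin T → C → ℕ,
        ∑ a with ∀ i t j, Z a t i j = v i t j, p a
          = ∏ i, ∑ a with ∀ t j, Z a t i j = v i t j, p a) := by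
  classical
  have hK := cumQ_le_sum q
  choose w hquota hmean using fun i => exists_random_roster (hβ i) (∑ i, ∑ s, q s i)
  let e := Fintype.equivFin (D → Fin (∑ i, ∑ s, q s i) → C)
  let p := stdSimplex.map e (productLottery w)
  refine ⟨_, p, fun a t i j => countBefore (e.symm a i) (cumQ q t i) j, stdSimplex.zero_le p,
    stdSimplex.sum_eq_one p, fun a t i => sum_countBefore _ (hK t i),
    fun a t t' h i j => countBefore_mono _ j (cumQ_mono q i h), fun a ha t i j => ?_,
    fun t i j => ?_, fun v => ?_⟩
  · obtain ⟨r, hr, rfl⟩ := exists_ne_zero_of_map_stdSimplex_ne_zero ha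
    rw [productLottery_apply, prod_ne_zero_iff] at hr
    simp_rw [e.symm_apply_apply]
    exact eq_floor_or_eq_ceil_of_mem_Icc_s8 <|
      hquota i (r i) (hr i (mem_univ i)) _ (hK t i) j
  · simp_rw [p, sum_map_stdSimplex_mul, e.symm_apply_apply]
    rw [← hmean i _ (hK t i) j, ← map_eval_productLottery w i, sum_map_stdSimplex_mul]
  · simp_rw [p, sum_filter_map_stdSimplex, e.symm_apply_apply]
    exact sum_filter_forall_productLottery w fun i r =>
      ∀ t j, countBefore r (cumQ q t i) j = v i t j

/-- For every reservation problem over a finite horizon T there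
exists a finitely supported lottery over monotone sequences of reservation tables
that is unbiased, stays within department quota almost surely, and under which
the department allocation processes are mutually independent across departments
(the joint probability mass function factorizes over departments). -/
theorem lottery_with_independent_departments
    (D C : Type) [Fintype D] [Fintype C] [DecidableEq D] [DecidableEq C]
    (hD : 2 ≤ Fintype.card D) (hC : 2 ≤ Fintype.card C)
    (α : C → ℝ) (hα0 : ∀ j, 0 < α j) (hα1 : ∀ j, α j < 1)
    (hαsum : ∑ j, α j = 1)
    (T : ℕ) (q : Fin T → D → ℕ) :
    ∃ (N : ℕ) (p : Fin N → ℝ) (Z : Fin N → Fin T → D → C → ℕ),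
      (∀ a, 0 ≤ p a) ∧ (∑ a, p a = 1) ∧
      (∀ a t i, ∑ j, Z a t i j = cumQ q t i) ∧
      (∀ a (t t' : Fin T), t ≤ t' → ∀ i j, Z a t i j ≤ Z a t' i j) ∧
      (∀ a, p a ≠ 0 → ∀ t i j,
        ((Z a t i j : ℕ) : ℤ) = ⌊α j * ((cumQ q t i : ℕ) : ℝ)⌋ ∨
        ((Z a t i j : ℕ) : ℤ) = ⌈α j * ((cumQ q t i : ℕ) : ℝ)⌉) ∧
      (∀ t i j, ∑ a, p a * ((Z a t i j : ℕ) : ℝ) = α j * ((cumQ q t i : ℕ) : ℝ)) ∧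
      (∀ v : D → Fin T → C → ℕ,
        ∑ a ∈ Finset.univ.filter (fun a : Fin N => ∀ i t j, Z a t i j = v i t j), p a
          = ∏ i, ∑ a ∈ Finset.univ.filter (fun a : Fin N => ∀ t j, Z a t i j = v i t j), p a) := by
  simpa only [cumShare_const] using
    lottery_with_independent_departments_general (β := fun _ _ => α)
      (fun _ _ => ⟨fun j => (hα0 j).le, hαsum⟩) q
end
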